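/- Let q ≥ 2, n, d, m be positive integers and let C ⊆ (Fin q)^n be a code with minimum Hamming distance at least d. Fix a coordinate j and a symbol β, and let B := {w ∈ C : w_j = β} (a block for column j). Suppose that for every coordinate i ≠ j and every symbol α ∈ Fin q, exactly m words of B have α in coordinate i. If n − d does not divide m(n−1), then for every u ∈ C \ B there exists v ∈ B with d_H(u,v) ∉ {d, n}. -/

import Mathlib

/-- The divisibility argument (Proposition 4.2 in the thesis): let `C ⊆ (Fin q)^n`
be a code with minimum Hamming distance at least `d`, and let
`B = {w ∈ C : w j = β}` be a block for column `j` containing every symbol exactly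
`m` times in every column other than `j`.  If `n - d` does not divide `m(n-1)`,
then for each `u ∈ C \ B` there is a word `v ∈ B` with `d_H(u,v) ∉ {d, n}`. -/
theorem divisibility_argument (q n d m : ℕ)
    (hq : 2 ≤ q) (hn : 0 < n) (hd : 0 < d) (hm : 0 < m)
    (C : Finset (Fin n → Fin q))
    (hC : ∀ u ∈ C, ∀ v ∈ C, u ≠ v → d ≤ hammingDist u v)
    (j : Fin n) (β : Fin q)
    (hblock : ∀ i : Fin n, i ≠ j → ∀ α : Fin q,
      (((C.filter (fun w => w j = β)).filter (fun w => w i = α)).card = m))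
    (hndvd : ¬ ((n : ℤ) - (d : ℤ) ∣ (m : ℤ) * ((n : ℤ) - 1)))
    (u : Fin n → Fin q) (hu : u ∈ C) (huB : u ∉ C.filter (fun w => w j = β)) :
    ∃ v ∈ C.filter (fun w => w j = β),
      hammingDist u v ≠ d ∧ hammingDist u v ≠ n := by
  by_contra! hcon
  apply hndvd
  have huj : u j ≠ β := fun h => huB (Finset.mem_filter.2 ⟨hu, h⟩)
  have key : ∀ v : Fin n → Fin q,
      (n : ℤ) - (hammingDist u v : ℤ) = ∑ i : Fin n, if v i = u i then (1 : ℤ) else 0 := by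
    intro v
    have h1 : (hammingDist u v : ℤ) = ∑ i : Fin n, if v i = u i then (0 : ℤ) else 1 := by
      unfold hammingDist
      rw [Finset.card_filter]
      push_cast
      refine Finset.sum_congr rfl fun i _ => ?_
      by_cases h : v i = u i
      · simp [h]
      · simp [h, Ne.symm h]
    have h2 : (n : ℤ) = ∑ i : Fin n, (1 : ℤ) := by simp
    rw [h1, h2, ← Finset.sum_sub_distrib]
    refine Finset.sum_congr rfl fun i _ => ?_
    split_ifs <;> simp
  have hsum : ∑ v ∈ C.filter (fun w => w j = β), ((n : ℤ) - (hammingDist u v : ℤ))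
      = (m : ℤ) * ((n : ℤ) - 1) := by
    simp_rw [key]
    rw [Finset.sum_comm, ← Finset.add_sum_erase _ _ (Finset.mem_univ j)]
    have h0 : ∑ v ∈ C.filter (fun w => w j = β), (if v j = u j then (1 : ℤ) else 0) = 0 := by
      refine Finset.sum_eq_zero fun v hv => ?_
      rw [(Finset.mem_filter.1 hv).2, if_neg (Ne.symm huj)]
    have h1 : ∀ i ∈ Finset.univ.erase j,
        ∑ v ∈ C.filter (fun w => w j = β), (if v i = u i then (1 : ℤ) else 0) = m := by
      intro i hi
      rw [← hblock i (Finset.ne_of_mem_erase hi) (u i), Finset.card_filter _ (Finset.filter _ C)]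
      push_cast
      rfl
    rw [h0, Finset.sum_congr rfl h1, Finset.sum_const, Finset.card_erase_of_mem (Finset.mem_univ j),
      Finset.card_univ, Fintype.card_fin, nsmul_eq_mul, Nat.cast_sub hn]
    push_cast
    ring
  rw [← hsum]
  refine Finset.dvd_sum fun v hv => ?_
  by_cases h : hammingDist u v = d
  · rw [h]
  · rw [hcon v hv h]
    simp
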